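/- arXiv:0709.2705 — 2 statements merged into one kernel-verified Lean document; each statement's English description precedes it below -/
import Mathlib

section
/- Let u : ℝ × ℝⁿ → ℝ be a smooth solution of the PDE ∂u/∂t = Δu + P(u) with admissible decay, and suppose the action along the solution converges at both ends: A(u(t, ·)) → α₋ as t → −∞ and A(u(t, ·)) → α₊ as t → +∞, with α₋, α₊ ∈ ℝ. Then the energy of u equals the difference of the limiting actions: E(u) = α₋ − α₊; in particular a solution connecting two finite-action equilibria has finite energy. -/
open MeasureTheory Filter Topology
open scoped ENNReal

noncomputable section

/-- Euclidean space `ℝⁿ`. -/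
abbrev Spc (n : ℕ) := EuclideanSpace ℝ (Fin n)

/-- The Laplacian in the spatial variables. -/
noncomputable def lap {n : ℕ} (f : Spc n → ℝ) (x : Spc n) : ℝ :=
  ∑ i : Fin n, fderiv ℝ (fun y => fderiv ℝ f y (EuclideanSpace.single i 1)) x
    (EuclideanSpace.single i 1)

/-- The polynomial nonlinearity `P(f)(x) = -f(x)^N + ∑_{i<N} aᵢ(x) f(x)^i`. -/
noncomputable def Pfun {n N : ℕ} (a : Fin N → Spc n → ℝ) (f : Spc n → ℝ) (x : Spc n) : ℝ :=
  -(f x) ^ N + ∑ i : Fin N, a i x * f x ^ (i : ℕ)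

/-- The time derivative `∂u/∂t`. -/
noncomputable def timeDeriv {n : ℕ} (u : ℝ × Spc n → ℝ) (t : ℝ) (x : Spc n) : ℝ :=
  deriv (fun s => u (s, x)) t

/-- `u` is a global solution of `∂u/∂t = Δu + P(u)`. -/
def IsSol {n N : ℕ} (a : Fin N → Spc n → ℝ) (u : ℝ × Spc n → ℝ) : Prop :=
  ∀ t x, timeDeriv u t x = lap (fun y => u (t, y)) x + Pfun a (fun y => u (t, y)) x

/-- `w` is an equilibrium: `Δw + P(w) = 0`. -/
def IsEquilibrium {n N : ℕ} (a : Fin N → Spc n → ℝ) (w : Spc n → ℝ) : Prop :=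
  ∀ x, lap w x + Pfun a w x = 0

/-- The energy density `|∂u/∂t|² + |Δu + P(u)|²`. -/
noncomputable def energyDensity {n N : ℕ} (a : Fin N → Spc n → ℝ) (u : ℝ × Spc n → ℝ)
    (t : ℝ) (x : Spc n) : ℝ :=
  (timeDeriv u t x) ^ 2 + (lap (fun y => u (t, y)) x + Pfun a (fun y => u (t, y)) x) ^ 2

/-- The energy `E(u) = (1/2) ∫_ℝ ∫_{ℝⁿ} (|∂u/∂t|² + |Δu + P(u)|²) dx dt`, valued in `ℝ≥0∞`. -/
noncomputable def energy {n N : ℕ} (a : Fin N → Spc n → ℝ) (u : ℝ × Spc n → ℝ) : ℝ≥0∞ :=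
  (1 / 2) * ∫⁻ t : ℝ, ∫⁻ x : Spc n, ENNReal.ofReal (energyDensity a u t x)

/-- The action density `(1/2)|∇f|² + f^{N+1}/(N+1) - ∑_{i<N} aᵢ f^{i+1}/(i+1)`. -/
noncomputable def actionDensity {n N : ℕ} (a : Fin N → Spc n → ℝ) (f : Spc n → ℝ)
    (x : Spc n) : ℝ :=
  (1 / 2) * ‖gradient f x‖ ^ 2 + f x ^ (N + 1) / (N + 1)
    - ∑ i : Fin N, a i x * f x ^ ((i : ℕ) + 1) / ((i : ℕ) + 1)

/-- The action functional `A(f)`. -/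
noncomputable def action {n N : ℕ} (a : Fin N → Spc n → ℝ) (f : Spc n → ℝ) : ℝ :=
  ∫ x : Spc n, actionDensity a f x

/-- `f` has finite action. -/
def FiniteAction {n N : ℕ} (a : Fin N → Spc n → ℝ) (f : Spc n → ℝ) : Prop :=
  Integrable (actionDensity a f)

/-- The coefficients `aᵢ` are smooth, in `L¹ ∩ L∞`, with all derivatives of all orders
bounded. -/
def GoodCoeffs {n N : ℕ} (a : Fin N → Spc n → ℝ) : Prop :=
  ∀ i, ContDiff ℝ (⊤ : ℕ∞) (a i) ∧ Integrable (a i) ∧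
    ∀ k : ℕ, ∃ C : ℝ, ∀ x, ‖iteratedFDeriv ℝ k (a i) x‖ ≤ C

/-- `u`, `∂u/∂t` and the spatial derivatives of `u` up to order two are bounded by a
constant multiple of `(1+|x|)^{-(n+1)}`, uniformly for `t` in compact intervals. -/
def AdmissibleDecay {n : ℕ} (u : ℝ × Spc n → ℝ) : Prop :=
  ∀ T > (0 : ℝ), ∃ C : ℝ, ∀ t : ℝ, ∀ x : Spc n, |t| ≤ T →
    |u (t, x)| ≤ C * (1 + ‖x‖) ^ (-(n + 1 : ℝ)) ∧
    |timeDeriv u t x| ≤ C * (1 + ‖x‖) ^ (-(n + 1 : ℝ)) ∧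
    ‖fderiv ℝ (fun y => u (t, y)) x‖ ≤ C * (1 + ‖x‖) ^ (-(n + 1 : ℝ)) ∧
    ‖iteratedFDeriv ℝ 2 (fun y => u (t, y)) x‖ ≤ C * (1 + ‖x‖) ^ (-(n + 1 : ℝ))

/-!
The PDE is the negative `L²` gradient flow of the action, so along a solution
`A(u(S, ·)) - A(u(T, ·)) = ∫_S^T ∫ |∂u/∂t|² dx dt`; on a solution both terms of the energy density
equal `|∂u/∂t|²`, and `S → -∞`, `T → ∞` gives the claim by monotone convergence.

The decay of `u` does not control `∇ ∂u/∂t`, so the first variation cannot be integrated over all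
of `ℝⁿ`. It is tested against rescaled cutoffs `χ_k`, and one integration by parts in space moves
the gradient off `∂u/∂t`. The price is the error term `∫∫ (∂u/∂t) ∇χ_k · ∇u`, which vanishes in
the limit because `∇χ_k → 0` uniformly while `∂u/∂t` and `∇u` are square integrable on slabs.
-/

section Slices

variable {E F : Type*} [NormedAddCommGroup E] [NormedSpace ℝ E] [NormedAddCommGroup F]
  [NormedSpace ℝ F] {u : ℝ × E → F} {t : ℝ} {x : E}

lemma fderiv_slice (hu : DifferentiableAt ℝ u (t, x)) :
    fderiv ℝ (fun y => u (t, y)) x = (fderiv ℝ u (t, x)).comp (.inr ℝ ℝ E) :=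
  (hu.hasFDerivAt.comp x (hasFDerivAt_prodMk_right t x)).fderiv

lemma hasDerivAt_slice (hu : DifferentiableAt ℝ u (t, x)) :
    HasDerivAt (fun s => u (s, x)) (fderiv ℝ u (t, x) (1, 0)) t :=
  hu.hasFDerivAt.comp_hasDerivAt t ((hasDerivAt_id t).prodMk (hasDerivAt_const t x))

lemma contDiff_deriv_slice {m k : WithTop ℕ∞} (hu : ContDiff ℝ k u) (hmk : m + 1 ≤ k) :
    ContDiff ℝ m fun p : ℝ × E => deriv (fun s => u (s, p.2)) p.1 := by
  have hdiff : Differentiable ℝ u :=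
    hu.differentiable (ne_of_gt (zero_lt_one.trans_le (le_add_self.trans hmk)))
  simp_rw [fun p : ℝ × E => (hasDerivAt_slice (hdiff (p.1, p.2))).deriv]
  exact (hu.fderiv_right hmk).clm_apply contDiff_const

lemma hasDerivAt_fderiv_slice (hu : ContDiff ℝ 2 u) (t : ℝ) (x : E) :
    HasDerivAt (fun s => fderiv ℝ (fun y => u (s, y)) x)
      (fderiv ℝ (fun y => deriv (fun s => u (s, y)) t) x) t := by
  have hdiff : Differentiable ℝ u := hu.differentiable two_ne_zero
  have hdiff' : Differentiable ℝ (fderiv ℝ u) :=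
    (hu.fderiv_right (m := 1) le_rfl).differentiable one_ne_zero
  simp_rw [fun s => fderiv_slice (hdiff (s, x)),
    fun y => (hasDerivAt_slice (hdiff (t, y))).deriv]
  refine ((hasDerivAt_slice (hdiff' (t, x))).clm_comp
    (hasDerivAt_const t (ContinuousLinearMap.inr ℝ ℝ E))).congr_deriv ?_
  have hmixed := (ContinuousLinearMap.apply ℝ F ((1, 0) : ℝ × E)).hasFDerivAt.comp x
    ((hdiff' (t, x)).hasFDerivAt.comp x (hasFDerivAt_prodMk_right t x))
  have hsymm : IsSymmSndFDerivAt ℝ u (t, x) := hu.contDiffAt.isSymmSndFDerivAt (by simp)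
  refine Eq.trans ?_ hmixed.fderiv.symm
  ext v
  simp [hsymm.eq (1, 0) (0, v)]

end Slices

section Gradient

variable {E : Type*} [NormedAddCommGroup E] [InnerProductSpace ℝ E] [CompleteSpace E]
  {u : ℝ × E → ℝ}

lemma norm_gradient (f : E → ℝ) (x : E) : ‖gradient f x‖ = ‖fderiv ℝ f x‖ :=
  (InnerProductSpace.toDual ℝ E).symm.norm_map _

/-- The spatial gradient `∇u(t, x)` of a function on space-time. -/
def spatialGradient (u : ℝ × E → ℝ) (t : ℝ) (x : E) : E :=
  gradient (fun y => u (t, y)) x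

lemma continuous_gradient {f : E → ℝ} (hf : ContDiff ℝ 1 f) : Continuous (gradient f) :=
  (InnerProductSpace.toDual ℝ E).symm.continuous.comp (hf.continuous_fderiv one_ne_zero)

lemma continuous_spatialGradient (hu : ContDiff ℝ 1 u) :
    Continuous fun p : ℝ × E => spatialGradient u p.1 p.2 := by
  have hslice : ContDiff ℝ 1 (Function.uncurry fun (p : ℝ × E) (y : E) => u (p.1, y)) :=
    hu.comp ((contDiff_fst.comp contDiff_fst).prodMk contDiff_snd)
  exact (InnerProductSpace.toDual ℝ E).symm.continuous.comp
    (hslice.fderiv contDiff_snd (m := 1) (n := 0) (by simp)).continuous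

lemma hasDerivAt_spatialGradient (hu : ContDiff ℝ 2 u) (t : ℝ) (x : E) :
    HasDerivAt (fun s => spatialGradient u s x)
      (gradient (fun y => deriv (fun s => u (s, y)) t) x) t :=
  let toGradient : (E →L[ℝ] ℝ) →L[ℝ] E :=
    (InnerProductSpace.toDual ℝ E).symm.toContinuousLinearEquiv.toContinuousLinearMap
  toGradient.hasFDerivAt.comp_hasDerivAt t (hasDerivAt_fderiv_slice hu t x)

end Gradient

section Cutoff

variable (E : Type*) [NormedAddCommGroup E] [InnerProductSpace ℝ E]

/-- The bump function that is rescaled to obtain cutoffs of `E`. -/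
def unitBump : ContDiffBump (0 : E) :=
  ⟨1, 2, one_pos, one_lt_two⟩

/-- The smooth cutoff equal to `1` on the ball of radius `k + 1` about the origin and vanishing
outside the ball of radius `2 (k + 1)`. -/
def cutoff (k : ℕ) (x : E) : ℝ :=
  unitBump E ((k + 1 : ℝ)⁻¹ • x)

variable {E}

lemma norm_cutoff_le_one (k : ℕ) (x : E) : ‖cutoff E k x‖ ≤ 1 :=
  (Real.norm_of_nonneg (unitBump E).nonneg).trans_le (unitBump E).le_one

lemma contDiff_cutoff {m : ℕ∞} (k : ℕ) : ContDiff ℝ m (cutoff E k) :=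
  (unitBump E).contDiff.comp (contDiff_const_smul _)

lemma tendsto_cutoff (x : E) : Tendsto (fun k => cutoff E k x) atTop (𝓝 1) := by
  have hscale : Tendsto (fun k : ℕ => (k + 1 : ℝ)⁻¹ • x) atTop (𝓝 0) := by
    simpa using (tendsto_one_div_add_atTop_nhds_zero_nat (𝕜 := ℝ)).smul_const x
  have hone : unitBump E 0 = 1 := (unitBump E).one_of_mem_closedBall (by simp [unitBump])
  exact hone ▸ ((unitBump E).continuous.tendsto 0).comp hscale

lemma hasCompactSupport_cutoff [FiniteDimensional ℝ E] (k : ℕ) :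
    HasCompactSupport (cutoff E k) :=
  (unitBump E).hasCompactSupport.comp_smul (by positivity)

lemma exists_norm_fderiv_cutoff_le [FiniteDimensional ℝ E] :
    ∃ L : ℝ, ∀ k (x : E), ‖fderiv ℝ (cutoff E k) x‖ ≤ 1 / (k + 1) * L := by
  have hbump : ContDiff ℝ 1 (unitBump E) := (unitBump E).contDiff
  obtain ⟨L, hL⟩ := (hbump.continuous_fderiv one_ne_zero).bounded_above_of_compact_support
    ((unitBump E).hasCompactSupport.fderiv (𝕜 := ℝ))
  refine ⟨L, fun k x => ?_⟩
  have hscale : fderiv ℝ (cutoff E k) x =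
      (k + 1 : ℝ)⁻¹ • fderiv ℝ (unitBump E) ((k + 1 : ℝ)⁻¹ • x) :=
    fderiv_comp_smul _
  rw [hscale, norm_smul, Real.norm_of_nonneg (by positivity), one_div]
  gcongr
  exact hL _

variable {α : Type*} [MeasurableSpace α] {μ : Measure α}

lemma tendsto_integral_cutoff_mul [MeasurableSpace E] [BorelSpace E] {π : α → E} {g : α → ℝ}
    (hπ : AEMeasurable π μ) (hg : Integrable g μ) :
    Tendsto (fun k => ∫ z, cutoff E k (π z) * g z ∂μ) atTop (𝓝 (∫ z, g z ∂μ)) := by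
  refine tendsto_integral_of_dominated_convergence _
    (fun k => (((contDiff_cutoff (m := 0) k).continuous.measurable.comp_aemeasurable
      hπ).aestronglyMeasurable).mul hg.aestronglyMeasurable)
    hg.norm (fun k => ae_of_all _ fun z => ?_) (ae_of_all _ fun z => ?_)
  · rw [norm_mul]
    exact mul_le_of_le_one_left (norm_nonneg _) (norm_cutoff_le_one k (π z))
  · simpa using (tendsto_cutoff (π z)).mul_const (g z)

lemma tendsto_integral_fderiv_cutoff [FiniteDimensional ℝ E] (π : α → E) {w : α → E}
    (hw : Integrable w μ) :
    Tendsto (fun k => ∫ z, fderiv ℝ (cutoff E k) (π z) (w z) ∂μ) atTop (𝓝 0) := by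
  obtain ⟨L, hL⟩ := exists_norm_fderiv_cutoff_le (E := E)
  refine squeeze_zero_norm
    (a := fun k : ℕ => 1 / (k + 1 : ℝ) * ∫ z, L * ‖w z‖ ∂μ) (fun k => ?_) ?_
  · rw [← integral_const_mul]
    refine norm_integral_le_of_norm_le ((hw.norm.const_mul L).const_mul _)
      (ae_of_all _ fun z => ?_)
    rw [← mul_assoc]
    exact ContinuousLinearMap.le_of_opNorm_le _ (hL k (π z)) (w z)
  · simpa using (tendsto_one_div_add_atTop_nhds_zero_nat (𝕜 := ℝ)).mul_const (∫ z, L * ‖w z‖ ∂μ)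

end Cutoff

section Slab

/-- Lebesgue measure on the space-time slab `(S, T] × E`. -/
abbrev slab (E : Type*) [MeasureSpace E] (S T : ℝ) : Measure (ℝ × E) :=
  (volume.restrict (Set.Ioc S T)).prod volume

variable {E : Type*} [MeasureSpace E] {S T : ℝ}

lemma slab_eq_restrict [SFinite (volume : Measure E)] :
    slab E S T = (volume : Measure (ℝ × E)).restrict (Set.Ioc S T ×ˢ Set.univ) := by
  rw [Measure.volume_eq_prod, ← Measure.prod_restrict, Measure.restrict_univ]

lemma ae_slab [SFinite (volume : Measure E)] {P : ℝ × E → Prop}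
    (hP : ∀ t ∈ Set.Ioc S T, ∀ x, P (t, x)) : ∀ᵐ p ∂slab E S T, P p := by
  rw [slab_eq_restrict]
  filter_upwards [ae_restrict_mem (measurableSet_Ioc.prod MeasurableSet.univ)] with p hp
  exact hP p.1 hp.1 p.2

lemma integrable_slab_of_continuous [MetricSpace E] [BorelSpace E]
    [SecondCountableTopology E] [IsLocallyFiniteMeasure (volume : Measure E)]
    {h : ℝ × E → ℝ} (hh : Continuous h) {K : Set E} (hK : IsCompact K)
    (hzero : ∀ t, ∀ x ∉ K, h (t, x) = 0) : Integrable h (slab E S T) := by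
  have hbox : IntegrableOn h (Set.Ioc S T ×ˢ K) (volume.prod volume) :=
    (hh.continuousOn.integrableOn_compact (isCompact_Icc.prod hK)).mono_set
      (Set.prod_mono Set.Ioc_subset_Icc_self subset_rfl)
  rw [slab_eq_restrict]
  refine hbox.of_forall_sdiff_eq_zero (measurableSet_Ioc.prod MeasurableSet.univ) ?_
  rintro ⟨t, x⟩ ⟨htx, htx'⟩
  exact hzero t x fun hx => htx' ⟨htx.1, hx⟩

end Slab

lemma integrable_fderiv_apply {E : Type*} [NormedAddCommGroup E] [NormedSpace ℝ E]
    [MeasurableSpace E] [OpensMeasurableSpace E] {μ : Measure E} [IsFiniteMeasureOnCompacts μ]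
    {φ : E → ℝ} {w : E → E} (hφ : ContDiff ℝ 1 φ) (hφc : HasCompactSupport φ)
    (hw : Continuous w) : Integrable (fun x => fderiv ℝ φ x (w x)) μ :=
  ((hφ.continuous_fderiv one_ne_zero).clm_apply hw).integrable_of_hasCompactSupport <|
    (hφc.fderiv (𝕜 := ℝ)).mono fun x hx hzero => hx (by simp [hzero])

section FirstVariation

variable {n N : ℕ} {a : Fin N → Spc n → ℝ}

lemma fderiv_gradient_eq_sum (φ f : Spc n → ℝ) (x : Spc n) :
    fderiv ℝ φ x (gradient f x) = ∑ i, fderiv ℝ φ x (EuclideanSpace.single i 1) *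
      fderiv ℝ f x (EuclideanSpace.single i 1) := by
  rw [← inner_gradient_left, ← (EuclideanSpace.basisFun (Fin n) ℝ).sum_inner_mul_inner]
  simp

lemma continuous_lap {f : Spc n → ℝ} (hf : ContDiff ℝ 2 f) : Continuous (lap f) :=
  continuous_finsetSum _ fun _ _ => ((((hf.fderiv_right (m := 1) le_rfl).clm_apply
    contDiff_const).continuous_fderiv one_ne_zero).clm_apply continuous_const)

lemma continuous_Pfun (ha : ∀ i, Continuous (a i)) {f : Spc n → ℝ} (hf : Continuous f) :
    Continuous (Pfun a f) := by
  unfold Pfun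
  fun_prop

lemma integral_mul_lap {φ f : Spc n → ℝ} (hφ : ContDiff ℝ 1 φ) (hφc : HasCompactSupport φ)
    (hf : ContDiff ℝ 2 f) : ∫ x, φ x * lap f x = -∫ x, fderiv ℝ φ x (gradient f x) := by
  let e : Fin n → Spc n := fun i => EuclideanSpace.single i 1
  have hf' : ∀ i, ContDiff ℝ 1 fun x => fderiv ℝ f x (e i) := fun i =>
    (hf.fderiv_right le_rfl).clm_apply contDiff_const
  have hφ' : ∀ i, Continuous fun x => fderiv ℝ φ x (e i) := fun i =>
    (hφ.continuous_fderiv one_ne_zero).clm_apply continuous_const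
  have hleft : ∀ i, Integrable fun x => φ x * fderiv ℝ (fun y => fderiv ℝ f y (e i)) x (e i) :=
    fun i => (hφ.continuous.mul (((hf' i).continuous_fderiv one_ne_zero).clm_apply
      continuous_const)).integrable_of_hasCompactSupport hφc.mul_right
  have hright : ∀ i, Integrable fun x => fderiv ℝ φ x (e i) * fderiv ℝ f x (e i) := fun i =>
    ((hφ' i).mul (hf' i).continuous).integrable_of_hasCompactSupport
      (hφc.fderiv_apply (𝕜 := ℝ) (e i)).mul_right
  simp_rw [fderiv_gradient_eq_sum, lap, Finset.mul_sum]
  rw [integral_finsetSum _ fun i _ => hleft i, integral_finsetSum _ fun i _ => hright i,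
    ← Finset.sum_neg_distrib]
  exact Finset.sum_congr rfl fun i _ => integral_mul_fderiv_eq_neg_fderiv_mul_of_integrable
    (hright i) (hleft i)
    ((hφ.continuous.mul (hf' i).continuous).integrable_of_hasCompactSupport hφc.mul_right)
    (fun x _ => hφ.differentiable one_ne_zero x)
    (fun x _ => (hf' i).differentiable one_ne_zero x)

/-- The potential part `s^{N+1}/(N+1) - ∑_{i<N} aᵢ(x) s^{i+1}/(i+1)` of the action density, an
antiderivative in `s` of the negative nonlinearity. -/
def actionPotential (a : Fin N → Spc n → ℝ) (x : Spc n) (s : ℝ) : ℝ :=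
  s ^ (N + 1) / (N + 1) - ∑ i : Fin N, a i x * s ^ ((i : ℕ) + 1) / ((i : ℕ) + 1)

lemma actionDensity_eq (a : Fin N → Spc n → ℝ) (f : Spc n → ℝ) (x : Spc n) :
    actionDensity a f x = (1 / 2) * ‖gradient f x‖ ^ 2 + actionPotential a x (f x) :=
  add_sub_assoc _ _ _

lemma hasDerivAt_actionPotential (a : Fin N → Spc n → ℝ) (f : Spc n → ℝ) (x : Spc n) :
    HasDerivAt (actionPotential a x) (-Pfun a f x) (f x) := by
  have hpow : ∀ k : ℕ, HasDerivAt (fun s : ℝ => s ^ (k + 1) / (k + 1)) (f x ^ k) (f x) := fun k =>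
    ((hasDerivAt_pow (k + 1) (f x)).div_const _).congr_deriv <| by
      have hk : (k : ℝ) + 1 ≠ 0 := by positivity
      simp [mul_div_cancel_left₀ _ hk]
  have hsum := HasDerivAt.fun_sum fun (i : Fin N) (_ : i ∈ Finset.univ) =>
    (hpow i).const_mul (a i x)
  simp_rw [← mul_div_assoc] at hsum
  exact ((hpow N).sub hsum).congr_deriv (by simp [Pfun, sub_eq_neg_add])

/-- The integrand of the first variation of the action at `f` in the direction `g`, before any
integration by parts. -/
def firstVariation (a : Fin N → Spc n → ℝ) (f g : Spc n → ℝ) (x : Spc n) : ℝ :=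
  fderiv ℝ g x (gradient f x) - Pfun a f x * g x

lemma hasDerivAt_actionDensity {u : ℝ × Spc n → ℝ} (hu : ContDiff ℝ 2 u) (t : ℝ) (x : Spc n) :
    HasDerivAt (fun s => actionDensity a (fun y => u (s, y)) x)
      (firstVariation a (fun y => u (t, y)) (timeDeriv u t) x) t := by
  have htime : HasDerivAt (fun s => u (s, x)) (timeDeriv u t x) t :=
    (hasDerivAt_slice (hu.differentiable two_ne_zero (t, x))).differentiableAt.hasDerivAt
  have hgrad : HasDerivAt (fun s => (1 / 2) * ‖spatialGradient u s x‖ ^ 2)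
      (fderiv ℝ (timeDeriv u t) x (spatialGradient u t x)) t := by
    refine ((hasDerivAt_spatialGradient hu t x).norm_sq.const_mul (1 / 2)).congr_deriv ?_
    rw [inner_gradient_right, conj_trivial, ← mul_assoc, one_div_mul_cancel two_ne_zero, one_mul]
    rfl
  have hpot := (hasDerivAt_actionPotential a (fun y => u (t, y)) x).comp t htime
  simp_rw [actionDensity_eq]
  exact (hgrad.add hpot).congr_deriv (by rw [firstVariation, neg_mul, ← sub_eq_add_neg]; rfl)

lemma integral_mul_firstVariation (ha : ∀ i, Continuous (a i)) {f g χ : Spc n → ℝ}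
    (hf : ContDiff ℝ 2 f) (hg : ContDiff ℝ 1 g) (hχ : ContDiff ℝ 1 χ)
    (hχc : HasCompactSupport χ) :
    ∫ x, χ x * firstVariation a f g x =
      -∫ x, (χ x * (g x * (lap f x + Pfun a f x)) + fderiv ℝ χ x (g x • gradient f x)) := by
  have hχg : ContDiff ℝ 1 fun x => χ x * g x := hχ.mul hg
  have hgrad := continuous_gradient (hf.of_le one_le_two)
  have ibp := integral_mul_lap hχg hχc.mul_right hf
  have hlap : Integrable fun x => χ x * g x * lap f x :=
    (hχg.continuous.mul (continuous_lap hf)).integrable_of_hasCompactSupport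
      hχc.mul_right.mul_right
  have hflux : Integrable fun x => fderiv ℝ (fun y => χ y * g y) x (gradient f x) :=
    integrable_fderiv_apply hχg hχc.mul_right hgrad
  have hrhs : Integrable fun x =>
      χ x * (g x * (lap f x + Pfun a f x)) + fderiv ℝ χ x (g x • gradient f x) :=
    ((hχ.continuous.mul (hg.continuous.mul ((continuous_lap hf).add (continuous_Pfun ha
      hf.continuous)))).integrable_of_hasCompactSupport hχc.mul_right).add <|
    integrable_fderiv_apply hχ hχc (hg.continuous.smul hgrad)
  have hsplit : ∀ x, χ x * firstVariation a f g x =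
      fderiv ℝ (fun y => χ y * g y) x (gradient f x) + χ x * g x * lap f x
        - (χ x * (g x * (lap f x + Pfun a f x)) + fderiv ℝ χ x (g x • gradient f x)) := fun x => by
    rw [fderiv_fun_mul (hχ.differentiable one_ne_zero x) (hg.differentiable one_ne_zero x)]
    simp only [firstVariation, add_apply, smul_apply, smul_eq_mul, map_smul]
    ring
  simp_rw [hsplit]
  rw [integral_sub (hflux.fun_add hlap) hrhs, integral_add hflux hlap, ibp]
  ring

end FirstVariation

section ActionDissipation

variable {n N : ℕ} {a : Fin N → Spc n → ℝ} {u : ℝ × Spc n → ℝ}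

lemma continuous_timeDeriv (hu : ContDiff ℝ 1 u) :
    Continuous fun p : ℝ × Spc n => timeDeriv u p.1 p.2 :=
  (contDiff_deriv_slice (m := 0) hu (by simp)).continuous

lemma contDiff_timeDeriv (hu : ContDiff ℝ 2 u) (t : ℝ) : ContDiff ℝ 1 (timeDeriv u t) :=
  (contDiff_deriv_slice (m := 1) hu le_rfl).comp (contDiff_prodMk_right t)

lemma continuous_firstVariation_slice (ha : ∀ i, Continuous (a i)) (hu : ContDiff ℝ 2 u) :
    Continuous fun p : ℝ × Spc n =>
      firstVariation a (fun y => u (p.1, y)) (timeDeriv u p.1) p.2 := by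
  have htime : ContDiff ℝ 1 fun p : ℝ × Spc n => timeDeriv u p.1 p.2 :=
    contDiff_deriv_slice hu le_rfl
  have hslice : ContDiff ℝ 1
      (Function.uncurry fun (p : ℝ × Spc n) (y : Spc n) => timeDeriv u p.1 y) :=
    htime.comp ((contDiff_fst.comp contDiff_fst).prodMk contDiff_snd)
  have hpair := (hslice.fderiv contDiff_snd (m := 1) (n := 0) (by simp)).continuous.clm_apply
    (continuous_spatialGradient (hu.of_le one_le_two))
  refine hpair.sub (Continuous.mul ?_ htime.continuous)
  have hu' := hu.continuous
  unfold Pfun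
  fun_prop

lemma integral_firstVariation_slice (ha : ∀ i, Continuous (a i)) (hu : ContDiff ℝ 2 u) {S T : ℝ}
    (hST : S ≤ T) (x : Spc n) :
    ∫ t in Set.Ioc S T, firstVariation a (fun y => u (t, y)) (timeDeriv u t) x =
      actionDensity a (fun y => u (T, y)) x - actionDensity a (fun y => u (S, y)) x := by
  rw [← intervalIntegral.integral_of_le hST]
  exact intervalIntegral.integral_eq_sub_of_hasDerivAt
    (fun t _ => hasDerivAt_actionDensity hu t x)
    (((continuous_firstVariation_slice ha hu).comp
      (continuous_id.prodMk continuous_const)).intervalIntegrable S T)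

lemma IsSol.integral_mul_firstVariation_timeDeriv (hsol : IsSol a u) (ha : ∀ i, Continuous (a i))
    (hu : ContDiff ℝ 2 u) {χ : Spc n → ℝ} (hχ : ContDiff ℝ 1 χ) (hχc : HasCompactSupport χ)
    (t : ℝ) :
    ∫ x, χ x * firstVariation a (fun y => u (t, y)) (timeDeriv u t) x =
      -∫ x, (χ x * timeDeriv u t x ^ 2 +
        fderiv ℝ χ x (timeDeriv u t x • spatialGradient u t x)) := by
  rw [integral_mul_firstVariation ha (f := fun y => u (t, y))
    (hu.comp (contDiff_prodMk_right t)) (contDiff_timeDeriv hu t) hχ hχc]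
  simp_rw [← hsol t, ← sq]
  rfl

lemma IsSol.integral_mul_actionDensity_sub (hsol : IsSol a u) (ha : ∀ i, Continuous (a i))
    (hu : ContDiff ℝ 2 u) {χ : Spc n → ℝ} (hχ : ContDiff ℝ 1 χ) (hχc : HasCompactSupport χ)
    {S T : ℝ} (hST : S ≤ T) :
    ∫ x, χ x * (actionDensity a (fun y => u (T, y)) x - actionDensity a (fun y => u (S, y)) x) =
      -(∫ p, χ p.2 * timeDeriv u p.1 p.2 ^ 2 ∂slab (Spc n) S T +
        ∫ p, fderiv ℝ χ p.2 (timeDeriv u p.1 p.2 • spatialGradient u p.1 p.2)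
          ∂slab (Spc n) S T) := by
  have htime := continuous_timeDeriv (hu.of_le one_le_two)
  have hχ_snd : Continuous fun p : ℝ × Spc n => χ p.2 := hχ.continuous.comp continuous_snd
  have hχ_zero : ∀ x ∉ tsupport χ, χ x = 0 := fun x => image_eq_zero_of_notMem_tsupport
  have hχ'_zero : ∀ x ∉ tsupport χ, fderiv ℝ χ x = 0 := fun x hx =>
    image_eq_zero_of_notMem_tsupport fun h => hx (tsupport_fderiv_subset ℝ h)
  have hvariation : Integrable (fun p : ℝ × Spc n => χ p.2 *
      firstVariation a (fun y => u (p.1, y)) (timeDeriv u p.1) p.2) (slab (Spc n) S T) :=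
    integrable_slab_of_continuous (hχ_snd.mul (continuous_firstVariation_slice ha hu)) hχc
      fun t x hx => by simp [hχ_zero x hx]
  have hdissipation : Integrable (fun p : ℝ × Spc n => χ p.2 * timeDeriv u p.1 p.2 ^ 2)
      (slab (Spc n) S T) :=
    integrable_slab_of_continuous (hχ_snd.mul (htime.pow 2)) hχc
      fun t x hx => by simp [hχ_zero x hx]
  have hflux : Integrable (fun p : ℝ × Spc n => fderiv ℝ χ p.2
      (timeDeriv u p.1 p.2 • spatialGradient u p.1 p.2)) (slab (Spc n) S T) :=
    integrable_slab_of_continuous (((hχ.continuous_fderiv one_ne_zero).comp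
      continuous_snd).clm_apply (htime.smul (continuous_spatialGradient
        (hu.of_le one_le_two)))) hχc fun t x hx => by simp [hχ'_zero x hx]
  simp_rw [← integral_firstVariation_slice ha hu hST, ← integral_const_mul]
  rw [← integral_prod_symm _ hvariation, integral_prod _ hvariation,
    ← integral_add hdissipation hflux, integral_prod _ (hdissipation.fun_add hflux),
    ← integral_neg]
  simp_rw [hsol.integral_mul_firstVariation_timeDeriv ha hu hχ hχc]

theorem IsSol.action_sub_action_eq (hsol : IsSol a u) (ha : ∀ i, Continuous (a i))
    (hu : ContDiff ℝ 2 u) {S T : ℝ} (hST : S ≤ T)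
    (hS : FiniteAction a fun x => u (S, x)) (hT : FiniteAction a fun x => u (T, x))
    (htime : MemLp (fun p => timeDeriv u p.1 p.2) 2 (slab (Spc n) S T))
    (hgrad : MemLp (fun p => spatialGradient u p.1 p.2) 2 (slab (Spc n) S T)) :
    action a (fun x => u (S, x)) - action a (fun x => u (T, x)) =
      ∫ p, timeDeriv u p.1 p.2 ^ 2 ∂slab (Spc n) S T := by
  have hflux : Integrable (fun p => timeDeriv u p.1 p.2 • spatialGradient u p.1 p.2)
      (slab (Spc n) S T) := memLp_one_iff_integrable.mp (hgrad.smul htime)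
  have haction := tendsto_integral_cutoff_mul aemeasurable_id (hT.sub hS)
  have hdissipation := tendsto_integral_cutoff_mul (E := Spc n)
    measurable_snd.aemeasurable htime.integrable_sq
  have herror := tendsto_integral_fderiv_cutoff Prod.snd hflux
  have hlim := tendsto_nhds_unique haction <| (hdissipation.add herror).neg.congr fun k =>
    (hsol.integral_mul_actionDensity_sub ha hu (contDiff_cutoff k)
      (hasCompactSupport_cutoff k) hST).symm
  rw [Pi.sub_def, integral_sub hT hS, add_zero] at hlim
  rw [← neg_eq_iff_eq_neg.mpr hlim, neg_sub]
  rfl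

lemma IsSol.energy_eq_lintegral_sq_timeDeriv (hsol : IsSol a u) :
    energy a u = ∫⁻ t, ∫⁻ x, ENNReal.ofReal (timeDeriv u t x ^ 2) := by
  have hdensity : ∀ t x, ENNReal.ofReal (energyDensity a u t x) =
      2 * ENNReal.ofReal (timeDeriv u t x ^ 2) := fun t x => by
    rw [energyDensity, ← hsol t x, ← two_mul, ENNReal.ofReal_mul zero_le_two,
      ENNReal.ofReal_ofNat]
  simp_rw [energy, hdensity, lintegral_const_mul' 2 _ ENNReal.ofNat_ne_top]
  rw [← mul_assoc, one_div, ENNReal.inv_mul_cancel two_ne_zero ENNReal.ofNat_ne_top, one_mul]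

theorem energy_eq_action_difference_general (ha : ∀ i, Continuous (a i)) (hu : ContDiff ℝ 2 u)
    (hsol : IsSol a u) (hfin : ∀ t, FiniteAction a fun x => u (t, x))
    (htime : ∀ S T, MemLp (fun p => timeDeriv u p.1 p.2) 2 (slab (Spc n) S T))
    (hgrad : ∀ S T, MemLp (fun p => spatialGradient u p.1 p.2) 2 (slab (Spc n) S T))
    {αm αp : ℝ}
    (hm : Tendsto (fun t => action a fun x => u (t, x)) atBot (𝓝 αm))
    (hp : Tendsto (fun t => action a fun x => u (t, x)) atTop (𝓝 αp)) :
    energy a u = ENNReal.ofReal (αm - αp) := by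
  have hcover : AECover (volume : Measure ℝ) atTop fun r : ℝ => Set.Ioc (-r) r :=
    aecover_Ioc tendsto_neg_atTop_atBot tendsto_id
  have hmeas : Measurable fun p : ℝ × Spc n => ENNReal.ofReal (timeDeriv u p.1 p.2 ^ 2) :=
    ((continuous_timeDeriv (hu.of_le one_le_two)).pow 2).measurable.ennreal_ofReal
  rw [hsol.energy_eq_lintegral_sq_timeDeriv]
  refine hcover.lintegral_eq_of_tendsto _ hmeas.lintegral_prod_right'.aemeasurable ?_
  refine (ENNReal.tendsto_ofReal ((hm.comp tendsto_neg_atTop_atBot).sub hp)).congr' ?_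
  filter_upwards [eventually_ge_atTop (0 : ℝ)] with r hr
  rw [← lintegral_prod _ hmeas.aemeasurable, Function.comp_apply,
    hsol.action_sub_action_eq ha hu (neg_le_self hr) (hfin _) (hfin _) (htime _ _) (hgrad _ _)]
  exact ofReal_integral_eq_lintegral_ofReal (htime _ _).integrable_sq
    (ae_of_all _ fun p => sq_nonneg _)

end ActionDissipation

section Integrability

lemma integrable_pow_succ {α : Type*} [MeasurableSpace α] {μ : Measure α} {f : α → ℝ}
    (hf : Integrable f μ) (hf' : MemLp f ⊤ μ) (m : ℕ) :
    Integrable (fun x => f x ^ (m + 1)) μ := by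
  induction m with
  | zero => simpa using hf
  | succ m ih => exact (ih.mul_of_top_left hf').congr (ae_of_all _ fun x => (pow_succ _ _).symm)

lemma memLp_of_norm_le_one_add_norm {α E F : Type*} [MeasurableSpace α] {μ : Measure α}
    [NormedAddCommGroup E] [NormedAddCommGroup F] {f : α → F} {π : α → E} {C r : ℝ} {p : ℝ≥0∞}
    (hweight : MemLp (fun z => (1 + ‖π z‖) ^ (-r)) p μ) (hf : AEStronglyMeasurable f μ)
    (hbound : ∀ᵐ z ∂μ, ‖f z‖ ≤ C * (1 + ‖π z‖) ^ (-r)) : MemLp f p μ := by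
  refine hweight.of_le_mul (c := C) hf ?_
  filter_upwards [hbound] with z hz
  rwa [Real.norm_of_nonneg (by positivity)]

lemma memLp_one_add_norm {E : Type*} [NormedAddCommGroup E] [NormedSpace ℝ E]
    [FiniteDimensional ℝ E] [MeasurableSpace E] [BorelSpace E] {μ : Measure E}
    [μ.IsAddHaarMeasure] {r : ℝ} (hr : Module.finrank ℝ E < r) {p : ℝ≥0∞} (hp : 1 ≤ p) :
    MemLp (fun x : E => (1 + ‖x‖) ^ (-r)) p μ := by
  have hr_pos : 0 < r := (Nat.cast_nonneg _).trans_lt hr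
  have hmeas : AEStronglyMeasurable (fun x : E => (1 + ‖x‖) ^ (-r)) μ :=
    Measurable.aestronglyMeasurable (by fun_prop)
  have hnorm : ∀ x : E, ‖(1 + ‖x‖) ^ (-r)‖ = (1 + ‖x‖) ^ (-r) := fun x =>
    Real.norm_of_nonneg (by positivity)
  rcases eq_or_ne p ⊤ with rfl | hp_top
  · refine memLp_top_of_bound hmeas 1 (ae_of_all _ fun x => ?_)
    rw [hnorm]
    exact Real.rpow_le_one_of_one_le_of_nonpos (by simp) (neg_nonpos.mpr hr_pos.le)
  · rw [← integrable_norm_rpow_iff hmeas (one_pos.trans_le hp).ne' hp_top]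
    have hp_one : 1 ≤ p.toReal := by simpa using ENNReal.toReal_mono hp_top hp
    refine (integrable_one_add_norm
      (hr.trans_le (le_mul_of_one_le_right hr_pos.le hp_one))).congr (ae_of_all _ fun x => ?_)
    simp_rw [hnorm]
    rw [← neg_mul, Real.rpow_mul (by positivity)]

end Integrability

section Decay

variable {n N : ℕ} {a : Fin N → Spc n → ℝ} {u : ℝ × Spc n → ℝ}

lemma finiteAction_of_memLp (ha : ∀ i, MemLp (a i) ⊤)
    {f : Spc n → ℝ} (hf : Integrable f) (hf' : MemLp f ⊤) (hgrad : MemLp (gradient f) 2) :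
    FiniteAction a f :=
  ((hgrad.norm.integrable_sq.const_mul _).add ((integrable_pow_succ hf hf' N).div_const _)).sub <|
    integrable_finsetSum _ fun i _ =>
      ((integrable_pow_succ hf hf' i).mul_of_top_right (ha i)).div_const _

lemma GoodCoeffs.memLp_top (ha : GoodCoeffs a) (i : Fin N) : MemLp (a i) ⊤ := by
  obtain ⟨hsmooth, -, hbound⟩ := ha i
  obtain ⟨M, hM⟩ := hbound 0
  exact memLp_top_of_bound hsmooth.continuous.aestronglyMeasurable M
    (ae_of_all _ fun x => norm_iteratedFDeriv_zero.symm.trans_le (hM x))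

lemma AdmissibleDecay.exists_bound (hdec : AdmissibleDecay u) (S T : ℝ) :
    ∃ C : ℝ, ∀ t ∈ Set.Icc S T, ∀ x,
      ‖u (t, x)‖ ≤ C * (1 + ‖x‖) ^ (-(n + 1 : ℝ)) ∧
      ‖timeDeriv u t x‖ ≤ C * (1 + ‖x‖) ^ (-(n + 1 : ℝ)) ∧
      ‖spatialGradient u t x‖ ≤ C * (1 + ‖x‖) ^ (-(n + 1 : ℝ)) := by
  obtain ⟨C, hC⟩ := hdec (max |S| |T| + 1) (by positivity)
  refine ⟨C, fun t ht x => ?_⟩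
  have htime : |t| ≤ max |S| |T| + 1 := (abs_le_max_abs_abs ht.1 ht.2).trans (by simp)
  obtain ⟨hu, hderiv, hgrad, -⟩ := hC t x htime
  exact ⟨hu, hderiv, (norm_gradient _ _).trans_le hgrad⟩

lemma memLp_decayWeight {p : ℝ≥0∞} (hp : 1 ≤ p) :
    MemLp (fun x : Spc n => (1 + ‖x‖) ^ (-(n + 1 : ℝ))) p :=
  memLp_one_add_norm (by simp) hp

lemma AdmissibleDecay.memLp_slice (hdec : AdmissibleDecay u) (hu : Continuous u) (t : ℝ)
    {p : ℝ≥0∞} (hp : 1 ≤ p) : MemLp (fun x => u (t, x)) p := by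
  obtain ⟨C, hC⟩ := hdec.exists_bound t t
  exact memLp_of_norm_le_one_add_norm (memLp_decayWeight hp)
    (hu.comp (Continuous.prodMk_right t)).aestronglyMeasurable
    (ae_of_all _ fun x => (hC t (Set.left_mem_Icc.mpr le_rfl) x).1)

lemma AdmissibleDecay.memLp_spatialGradient_slice (hdec : AdmissibleDecay u)
    (hu : ContDiff ℝ 1 u) (t : ℝ) {p : ℝ≥0∞} (hp : 1 ≤ p) : MemLp (spatialGradient u t) p := by
  obtain ⟨C, hC⟩ := hdec.exists_bound t t
  exact memLp_of_norm_le_one_add_norm (memLp_decayWeight hp)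
    (continuous_gradient (hu.comp (contDiff_prodMk_right t))).aestronglyMeasurable
    (ae_of_all _ fun x => (hC t (Set.left_mem_Icc.mpr le_rfl) x).2.2)

lemma AdmissibleDecay.finiteAction (hdec : AdmissibleDecay u) (hu : ContDiff ℝ 1 u)
    (ha : GoodCoeffs a) (t : ℝ) : FiniteAction a fun x => u (t, x) :=
  finiteAction_of_memLp ha.memLp_top
    (memLp_one_iff_integrable.mp (hdec.memLp_slice hu.continuous t le_rfl))
    (hdec.memLp_slice hu.continuous t le_top) (hdec.memLp_spatialGradient_slice hu t one_le_two)

lemma AdmissibleDecay.memLp_timeDeriv (hdec : AdmissibleDecay u) (hu : ContDiff ℝ 1 u) (S T : ℝ)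
    {p : ℝ≥0∞} (hp : 1 ≤ p) :
    MemLp (fun q => timeDeriv u q.1 q.2) p (slab (Spc n) S T) := by
  obtain ⟨C, hC⟩ := hdec.exists_bound S T
  exact memLp_of_norm_le_one_add_norm ((memLp_decayWeight hp).comp_snd _)
    (continuous_timeDeriv hu).aestronglyMeasurable
    (ae_slab fun t ht x => (hC t (Set.Ioc_subset_Icc_self ht) x).2.1)

lemma AdmissibleDecay.memLp_spatialGradient (hdec : AdmissibleDecay u) (hu : ContDiff ℝ 1 u)
    (S T : ℝ) {p : ℝ≥0∞} (hp : 1 ≤ p) :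
    MemLp (fun q => spatialGradient u q.1 q.2) p (slab (Spc n) S T) := by
  obtain ⟨C, hC⟩ := hdec.exists_bound S T
  exact memLp_of_norm_le_one_add_norm ((memLp_decayWeight hp).comp_snd _)
    (continuous_spatialGradient hu).aestronglyMeasurable
    (ae_slab fun t ht x => (hC t (Set.Ioc_subset_Icc_self ht) x).2.2)

end Decay

/-- If `u` is a smooth solution of the PDE with admissible decay and the
action along the solution converges to `α₋` as `t → -∞` and to `α₊` as `t → +∞`, then the
energy of `u` equals the difference of the limiting actions: `E(u) = α₋ - α₊`. -/
theorem energy_eq_action_difference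
    {n N : ℕ} (hn : 1 ≤ n) (hN : 2 ≤ N)
    (a : Fin N → Spc n → ℝ) (ha : GoodCoeffs a)
    (u : ℝ × Spc n → ℝ) (hu : ContDiff ℝ (⊤ : ℕ∞) u) (hdec : AdmissibleDecay u)
    (hsol : IsSol a u)
    (αm αp : ℝ)
    (hm : Tendsto (fun t : ℝ => action a (fun x => u (t, x))) atBot (nhds αm))
    (hp : Tendsto (fun t : ℝ => action a (fun x => u (t, x))) atTop (nhds αp)) :
    energy a u = ENNReal.ofReal (αm - αp) := by
  have hu₂ : ContDiff ℝ 2 u := hu.of_le (WithTop.coe_le_coe.mpr le_top)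
  have hu₁ : ContDiff ℝ 1 u := hu₂.of_le one_le_two
  exact energy_eq_action_difference_general (fun i => (ha i).1.continuous) hu₂ hsol
    (hdec.finiteAction hu₁ ha) (fun S T => hdec.memLp_timeDeriv hu₁ S T one_le_two)
    (fun S T => hdec.memLp_spatialGradient hu₁ S T one_le_two) hm hp

end
end

section
/- Let n = 1 and let N ≥ 2 be even. Let a₀, …, a_{N−1} : ℝ → ℝ be bounded. If w : ℝ → ℝ is twice differentiable and solves the equilibrium equation w''(x) + P(w)(x) = 0, i.e. w''(x) = w(x)^N − Σ_{i=0}^{N−1} aᵢ(x) w(x)ⁱ, for all x ∈ ℝ, then w is bounded from below: there exists c ∈ ℝ with w(x) ≥ c for all x. -/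
open MeasureTheory Filter Topology

noncomputable section

/-!
Bounded coefficients give `|∑ aᵢ tⁱ| ≤ |t|^N - t²/2 + D`. Hence `w'' ≥ w²/2 - D` wherever `w ≥ 0`,
and a Keller–Osserman argument bounds `w` from above: the barriers `v = m / cos² (x - c)` blow up at
`c ± π/2` and satisfy `v'' ≤ 6 v² / m`, so the one touching `w` from above has `m ≤ 12 + D`, whence
`w c ≤ 12 + D`.

For odd `N` the function `-w` satisfies the same inequality, so `w` is also bounded from below. For
even `N` the inequality `w'' ≥ w²/2 - D` holds everywhere, in particular `w'' + w ≥ -E`. Integrating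
this against `sin (x - a)` over `[a, a + π]` gives `w a + w (a + π) ≥ -2 E`, which turns the upper
bound at `a + π` into a lower bound at `a`.
-/

section Polynomial

theorem abs_sum_mul_pow_le {N : ℕ} (a : Fin N → ℝ) {t r : ℝ} (hr : 1 ≤ r) (ht : |t| ≤ r) :
    |∑ i, a i * t ^ (i : ℕ)| ≤ (∑ i, |a i|) * r ^ (N - 1) :=
  calc |∑ i, a i * t ^ (i : ℕ)| ≤ ∑ i, |a i * t ^ (i : ℕ)| := Finset.abs_sum_le_sum_abs _ _
    _ ≤ ∑ i, |a i| * r ^ (N - 1) := by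
      gcongr with i
      rw [abs_mul, abs_pow]
      gcongr
      calc |t| ^ (i : ℕ) ≤ r ^ (i : ℕ) := by gcongr
        _ ≤ r ^ (N - 1) := pow_le_pow_right₀ hr (by lia)
    _ = (∑ i, |a i|) * r ^ (N - 1) := (Finset.sum_mul ..).symm

theorem abs_sum_mul_pow_le_abs_pow_sub {N : ℕ} (hN : 2 ≤ N) {a : Fin N → ℝ} {B : ℝ}
    (ha : ∑ i, |a i| ≤ B) (t : ℝ) :
    |∑ i, a i * t ^ (i : ℕ)| ≤
      |t| ^ N - t ^ 2 / 2 + (B * (1 + 2 * B) ^ (N - 1) + (1 + 2 * B) ^ 2 / 2) := by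
  have hB : 0 ≤ B := (Finset.sum_nonneg fun i _ => abs_nonneg (a i)).trans ha
  have bound {r : ℝ} (hr : 1 ≤ r) (ht : |t| ≤ r) :
      |∑ i, a i * t ^ (i : ℕ)| ≤ B * r ^ (N - 1) :=
    (abs_sum_mul_pow_le a hr ht).trans (by gcongr)
  rw [← sq_abs t]
  rcases le_total |t| (1 + 2 * B) with hsmall | hlarge
  · have hsq : |t| ^ 2 ≤ (1 + 2 * B) ^ 2 := by gcongr
    have := bound (by linarith) hsmall
    have : 0 ≤ |t| ^ N := by positivity
    linarith
  · have ht : 1 ≤ |t| := by linarith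
    have hdom : |t| ^ 2 / 2 ≤ |t| ^ N - B * |t| ^ (N - 1) :=
      calc |t| ^ 2 / 2 = |t| * (|t| / 2) := by ring
        _ ≤ |t| ^ (N - 1) * (|t| - B) := by
          gcongr
          · exact le_self_pow₀ ht (by lia)
          · linarith
        _ = |t| ^ N - B * |t| ^ (N - 1) := by
          rw [mul_sub, pow_sub_one_mul (by lia), mul_comm B]
    have := bound ht le_rfl
    have : 0 ≤ B * (1 + 2 * B) ^ (N - 1) + (1 + 2 * B) ^ 2 / 2 := by positivity
    linarith

theorem exists_abs_sum_mul_pow_le_abs_pow_sub {X : Type*} {N : ℕ} (hN : 2 ≤ N)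
    {a : Fin N → X → ℝ} (ha : ∀ i, ∃ C : ℝ, ∀ x, |a i x| ≤ C) :
    ∃ D : ℝ, 0 ≤ D ∧
      ∀ x t, |∑ i, a i x * t ^ (i : ℕ)| ≤ |t| ^ N - t ^ 2 / 2 + D := by
  choose C hC using ha
  have hsum (x : X) : ∑ i, |a i x| ≤ ∑ i, |C i| :=
    Finset.sum_le_sum fun i _ => (hC i x).trans (le_abs_self _)
  exact ⟨_, by positivity, fun x => abs_sum_mul_pow_le_abs_pow_sub hN (hsum x)⟩

end Polynomial

section SecondDerivative

theorem deriv_deriv_nonpos_of_isLocalMax {f : ℝ → ℝ} {x : ℝ} (hmax : IsLocalMax f x)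
    (hf : ContinuousAt f x) : deriv (deriv f) x ≤ 0 := by
  by_contra! hpos
  have hmin : IsLocalMin f x := isLocalMin_of_deriv_deriv_pos hpos hmax.deriv_eq_zero hf
  have hconst : f =ᶠ[𝓝 x] fun _ => f x := by
    filter_upwards [hmax, hmin] with y hle hge using le_antisymm hle hge
  have hzero : deriv (deriv f) x = 0 := by simpa using hconst.deriv.deriv_eq
  exact hpos.ne' hzero

theorem second_deriv_le_of_eventuallyLE {f g f' g' : ℝ → ℝ} {x f'' g'' : ℝ}
    (hf : ∀ᶠ y in 𝓝 x, HasDerivAt f (f' y) y) (hf' : HasDerivAt f' f'' x)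
    (hg : ∀ᶠ y in 𝓝 x, HasDerivAt g (g' y) y) (hg' : HasDerivAt g' g'' x)
    (hle : f ≤ᶠ[𝓝 x] g) (heq : f x = g x) : f'' ≤ g'' := by
  have hmax : IsLocalMax (f - g) x := by
    filter_upwards [hle] with y hy
    simpa [heq] using hy
  have hderiv : deriv (f - g) =ᶠ[𝓝 x] f' - g' := by
    filter_upwards [hf, hg] with y hfy hgy using (hfy.sub hgy).deriv
  have hcont : ContinuousAt (f - g) x :=
    hf.self_of_nhds.continuousAt.sub hg.self_of_nhds.continuousAt
  have hnonpos := deriv_deriv_nonpos_of_isLocalMax hmax hcont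
  rw [hderiv.deriv_eq, (hf'.sub hg').deriv] at hnonpos
  exact sub_nonpos.1 hnonpos

end SecondDerivative

section DifferentialInequalities

open Real Set

variable {w w' w'' : ℝ → ℝ} {a c x D E : ℝ}

theorem cos_sub_pos_of_mem_Ioo (hx : x ∈ Ioo (c - π / 2) (c + π / 2)) : 0 < cos (x - c) :=
  cos_pos_of_mem_Ioo ⟨by linarith [hx.1], by linarith [hx.2]⟩

theorem hasDerivAt_tan_sub (hx : cos (x - c) ≠ 0) :
    HasDerivAt (fun y => tan (y - c)) (1 + tan (x - c) ^ 2) x := by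
  have h := (hasDerivAt_tan hx).comp_sub_const x c
  rwa [one_div, ← inv_one_add_tan_sq hx, inv_inv] at h

theorem hasDerivAt_one_add_tan_sub_sq (m : ℝ) (hx : cos (x - c) ≠ 0) :
    HasDerivAt (fun y => m * (1 + tan (y - c) ^ 2))
      (2 * m * (tan (x - c) * (1 + tan (x - c) ^ 2))) x :=
  ((((hasDerivAt_tan_sub hx).fun_pow 2).const_add 1).const_mul m).congr_deriv (by ring)

theorem hasDerivAt_tan_sub_mul_one_add_sq (m : ℝ) (hx : cos (x - c) ≠ 0) :
    HasDerivAt (fun y => 2 * m * (tan (y - c) * (1 + tan (y - c) ^ 2)))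
      (2 * m * ((1 + tan (x - c) ^ 2) * (1 + 3 * tan (x - c) ^ 2))) x :=
  (((hasDerivAt_tan_sub hx).fun_mul
    (((hasDerivAt_tan_sub hx).fun_pow 2).const_add 1)).const_mul (2 * m)).congr_deriv (by ring)

theorem exists_touching_one_add_tan_sub_sq (hw : ContinuousOn w (Icc (c - π / 2) (c + π / 2)))
    (hc : 0 < w c) :
    ∃ m, w c ≤ m ∧ ∃ y ∈ Ioo (c - π / 2) (c + π / 2), w y = m * (1 + tan (y - c) ^ 2) ∧
      ∀ x ∈ Ioo (c - π / 2) (c + π / 2), w x ≤ m * (1 + tan (x - c) ^ 2) := by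
  have hcmem : c ∈ Icc (c - π / 2) (c + π / 2) := by constructor <;> linarith [pi_pos]
  obtain ⟨y, hy, hmax⟩ := isCompact_Icc.exists_isMaxOn_mem_subset
    (f := fun x => w x * cos (x - c) ^ 2) (s := Ioo (c - π / 2) (c + π / 2))
    (hw.mul (by fun_prop)) hcmem (by
      rw [Icc_sdiff_Ioo_same (by linarith [pi_pos])]
      rintro x (rfl | rfl) <;> simpa using hc)
  have hsec {x : ℝ} (hx : x ∈ Ioo (c - π / 2) (c + π / 2)) :
      cos (x - c) ^ 2 * (1 + tan (x - c) ^ 2) = 1 := by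
    rw [← inv_one_add_tan_sq (cos_sub_pos_of_mem_Ioo hx).ne']
    exact inv_mul_cancel₀ (by positivity)
  refine ⟨w y * cos (y - c) ^ 2, by simpa using hmax hcmem, y, hy, ?_, fun x hx => ?_⟩
  · rw [mul_assoc, hsec hy, mul_one]
  · calc w x = w x * cos (x - c) ^ 2 * (1 + tan (x - c) ^ 2) := by rw [mul_assoc, hsec hx, mul_one]
      _ ≤ w y * cos (y - c) ^ 2 * (1 + tan (x - c) ^ 2) := by
        gcongr ?_ * _
        exact hmax (Ioo_subset_Icc_self hx)

theorem le_of_sq_half_sub_le_second_deriv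
    (h₁ : ∀ x ∈ Icc (c - π / 2) (c + π / 2), HasDerivAt w (w' x) x)
    (h₂ : ∀ x ∈ Ioo (c - π / 2) (c + π / 2), HasDerivAt w' (w'' x) x) (hD : 0 ≤ D)
    (hw : ∀ x ∈ Ioo (c - π / 2) (c + π / 2), 0 ≤ w x → w x ^ 2 / 2 - D ≤ w'' x) :
    w c ≤ 12 + D := by
  by_contra! hc
  obtain ⟨m, hm, y, hy, heq, hle⟩ := exists_touching_one_add_tan_sub_sq
    (fun x hx => (h₁ x hx).continuousAt.continuousWithinAt) (by linarith)
  have hnhds : Ioo (c - π / 2) (c + π / 2) ∈ 𝓝 y := Ioo_mem_nhds hy.1 hy.2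
  have hcos {x : ℝ} (hx : x ∈ Ioo (c - π / 2) (c + π / 2)) : cos (x - c) ≠ 0 :=
    (cos_sub_pos_of_mem_Ioo hx).ne'
  have htouch : w'' y ≤ 2 * m * ((1 + tan (y - c) ^ 2) * (1 + 3 * tan (y - c) ^ 2)) :=
    second_deriv_le_of_eventuallyLE
      (mem_of_superset hnhds fun x hx => h₁ x (Ioo_subset_Icc_self hx)) (h₂ y hy)
      (mem_of_superset hnhds fun x hx => hasDerivAt_one_add_tan_sub_sq m (hcos hx))
      (hasDerivAt_tan_sub_mul_one_add_sq m (hcos hy)) (mem_of_superset hnhds hle) heq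
  set p := 1 + tan (y - c) ^ 2 with hp
  have hp1 : 1 ≤ p := le_add_of_nonneg_right (sq_nonneg _)
  have : 12 + D < m := hc.trans_le hm
  have hsuper := hw y hy (heq ▸ mul_nonneg (by linarith) (by linarith))
  have hbarrier : (m * p) ^ 2 / 2 - D ≤ 6 * m * p ^ 2 :=
    calc (m * p) ^ 2 / 2 - D ≤ 2 * m * (p * (1 + 3 * tan (y - c) ^ 2)) := heq ▸ hsuper.trans htouch
      _ = 6 * m * p ^ 2 - 4 * (m * p) := by rw [hp]; ring
      _ ≤ 6 * m * p ^ 2 := sub_le_self _ (mul_nonneg zero_le_four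
        (mul_nonneg (by linarith) (by linarith)))
  have hmD : D < m * (m - 12) / 2 := by nlinarith
  have hscale : m * (m - 12) / 2 ≤ m * (m - 12) / 2 * p ^ 2 :=
    le_mul_of_one_le_right (by linarith) (one_le_pow₀ hp1)
  linarith

theorem neg_two_mul_le_add_of_neg_le_second_deriv_add
    (h₁ : ∀ x ∈ Icc a (a + π), HasDerivAt w (w' x) x)
    (h₂ : ∀ x ∈ Icc a (a + π), HasDerivAt w' (w'' x) x)
    (hw : ∀ x ∈ Icc a (a + π), -E ≤ w'' x + w x) : -(2 * E) ≤ w a + w (a + π) := by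
  -- The monotone quantity is the Wronskian of `w + E` and `sin (x - a)`.
  have hderiv (x) (hx : x ∈ Icc a (a + π)) :
      HasDerivAt (fun y => w' y * sin (y - a) - (w y + E) * cos (y - a))
        ((w'' x + w x + E) * sin (x - a)) x := by
    have hsin := (hasDerivAt_sin (x - a)).comp_sub_const x a
    have hcos := (hasDerivAt_cos (x - a)).comp_sub_const x a
    exact (((h₂ x hx).fun_mul hsin).fun_sub (((h₁ x hx).add_const E).fun_mul hcos)).congr_deriv
      (by ring)
  have hmono : MonotoneOn (fun y => w' y * sin (y - a) - (w y + E) * cos (y - a))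
      (Icc a (a + π)) := by
    refine monotoneOn_of_hasDerivWithinAt_nonneg (convex_Icc _ _)
      (fun x hx => (hderiv x hx).continuousAt.continuousWithinAt)
      (fun x hx => (hderiv x (interior_subset hx)).hasDerivWithinAt) fun x hx => ?_
    have hx' := interior_subset hx
    exact mul_nonneg (by linarith [hw x hx'])
      (sin_nonneg_of_nonneg_of_le_pi (by linarith [hx'.1]) (by linarith [hx'.2]))
  have hle : a ≤ a + π := by linarith [pi_pos]
  have hends := hmono (left_mem_Icc.2 hle) (right_mem_Icc.2 hle) hle
  simp only [sub_self, add_sub_cancel_left, sin_zero, sin_pi, cos_zero, cos_pi] at hends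
  linarith

theorem abs_le_of_sq_half_sub_le_second_deriv (h₁ : ∀ x, HasDerivAt w (w' x) x)
    (h₂ : ∀ x, HasDerivAt w' (w'' x) x) (hD : 0 ≤ D) (hw : ∀ x, w x ^ 2 / 2 - D ≤ w'' x) (x : ℝ) :
    |w x| ≤ 13 + 3 * D := by
  have upper (y : ℝ) : w y ≤ 12 + D :=
    le_of_sq_half_sub_le_second_deriv (fun z _ => h₁ z) (fun z _ => h₂ z) hD fun z _ _ => hw z
  have hlinear (y : ℝ) : -(D + 1 / 2) ≤ w'' y + w y := by
    linarith [hw y, sq_nonneg (w y + 1)]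
  have lower := neg_two_mul_le_add_of_neg_le_second_deriv_add (a := x) (fun z _ => h₁ z)
    (fun z _ => h₂ z) fun z _ => hlinear z
  exact abs_le.2 ⟨by linarith [upper (x + π)], by linarith [upper x]⟩

theorem abs_le_of_sq_half_sub_le_abs_second_deriv (h₁ : ∀ x, HasDerivAt w (w' x) x)
    (h₂ : ∀ x, HasDerivAt w' (w'' x) x) (hD : 0 ≤ D)
    (hpos : ∀ x, 0 ≤ w x → w x ^ 2 / 2 - D ≤ w'' x)
    (hneg : ∀ x, w x ≤ 0 → w x ^ 2 / 2 - D ≤ -w'' x) (x : ℝ) : |w x| ≤ 12 + D := by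
  have upper : w x ≤ 12 + D :=
    le_of_sq_half_sub_le_second_deriv (fun y _ => h₁ y) (fun y _ => h₂ y) hD fun y _ => hpos y
  have lower : -w x ≤ 12 + D :=
    le_of_sq_half_sub_le_second_deriv (w := fun y => -w y) (fun y _ => (h₁ y).fun_neg)
      (fun y _ => (h₂ y).fun_neg) hD fun y _ hy => by
        simpa only [neg_sq] using hneg y (neg_nonneg.1 hy)
  exact abs_le'.2 ⟨upper, lower⟩

end DifferentialInequalities

theorem equilibria_bounded_below_one_dim_general {N : ℕ} (hN : 2 ≤ N)
    (a : Fin N → ℝ → ℝ) (ha : ∀ i, ∃ C : ℝ, ∀ x, |a i x| ≤ C) :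
    ∃ K : ℝ, ∀ w : ℝ → ℝ, Differentiable ℝ w → Differentiable ℝ (deriv w) →
      (∀ x, deriv (deriv w) x = w x ^ N - ∑ i : Fin N, a i x * w x ^ (i : ℕ)) →
      ∀ x, |w x| ≤ K := by
  obtain ⟨D, hD, hsum⟩ := exists_abs_sum_mul_pow_le_abs_pow_sub hN ha
  refine ⟨13 + 3 * D, fun w hw hw' heq x => ?_⟩
  have h₁ (y) : HasDerivAt w (deriv w y) y := (hw y).hasDerivAt
  have h₂ (y) : HasDerivAt (deriv w) (deriv (deriv w) y) y := (hw' y).hasDerivAt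
  have hbounds (y) := abs_le.1 (hsum y (w y))
  rcases N.even_or_odd with hEven | hOdd
  · refine abs_le_of_sq_half_sub_le_second_deriv h₁ h₂ hD (fun y => ?_) x
    rw [heq, ← hEven.pow_abs]
    linarith [hbounds y]
  · refine (abs_le_of_sq_half_sub_le_abs_second_deriv h₁ h₂ hD (fun y hy => ?_) (fun y hy => ?_)
      x).trans (by linarith)
    · have := hbounds y
      rw [abs_of_nonneg hy] at this
      linarith [heq y]
    · have := hbounds y
      rw [abs_of_nonpos hy, hOdd.neg_pow] at this
      linarith [heq y]

/-- In one spatial dimension, with `N ≥ 2` even and bounded coefficients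
`a₀, …, a_{N-1}`, every twice differentiable solution `w : ℝ → ℝ` of the equilibrium
equation `w'' = w^N - ∑_{i<N} aᵢ wⁱ` is bounded from below. -/
theorem equilibria_bounded_below_one_dim
    {N : ℕ} (hN : 2 ≤ N) (hNeven : Even N)
    (a : Fin N → ℝ → ℝ) (ha : ∀ i, ∃ C : ℝ, ∀ x, |a i x| ≤ C)
    (w : ℝ → ℝ) (hw : Differentiable ℝ w) (hw' : Differentiable ℝ (deriv w))
    (heq : ∀ x : ℝ, deriv (deriv w) x = w x ^ N - ∑ i : Fin N, a i x * w x ^ (i : ℕ)) :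
    ∃ c : ℝ, ∀ x : ℝ, c ≤ w x := by
  obtain ⟨K, hK⟩ := equilibria_bounded_below_one_dim_general hN a ha
  exact ⟨-K, fun x => (abs_le.1 (hK w hw hw' heq x)).1⟩

end
end
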